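/- There exist constants c ∈ (0,1) and b₀ ∈ (0,1) such that for all 0 ≤ a < b ≤ b₀ one has c·b ≤ s̄(a,b) < b; in particular s̄(a,b) ∼ b as b → 0⁺. -/

import Mathlib

/-!
The argument rests on two estimates near `0`.

* Integrating `(r^(N-1) ξ')' = r^(N-1) ξ` from `0`, where `r^(N-1) ξ'` vanishes, and using
  `ξ(0) ≤ ξ ≤ ξ(1)`, gives `ξ(0) r / N ≤ ξ'(r) ≤ ξ(1) r / N` (`deriv_xi_bounds`).
* The assumed asymptotics of `ζ` give `ζ(r) ≤ 2 r^(2-N)` and show that `-ζ'(r)` lies between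
  `(N-2)/2 · r^(1-N)` and `2(N-2) r^(1-N)` for small `r` (`zeta_bounds`).

Since `ξ' ≥ 0`, `ζ' ≤ 0` and `ζ > 0`, for every `a` one has `ξ_{[a,b]}'/ξ_{[a,b]} ≤ ξ'/ξ`. This
removes the dependence on `a`: inserted in the reflection law at `s = s̄(a,b)` it yields
`ξ'(b) (-ζ'(s) - ξ'(s) ζ(s) / ξ(s)) ≤ 2 ξ'(s) (-ζ'(b))` (`reflection_ineq`, stated without
denominators). By the two estimates the left side is at least a constant times `b s^(1-N)` and the
right side at most a constant times `s b^(1-N)`, so `s^N ≥ c b^N`.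
-/

open Real Set Filter Topology

/-- Context: the two fundamental solutions `ξ`, `ζ` of `ℒu = -u'' - ((N-1)/r) u' + u = 0`
on `(0,1)` together with their basic properties (Proposition 2.1 of the paper). -/
structure GreenData (N : ℕ) where
  xi : ℝ → ℝ
  zeta : ℝ → ℝ
  xi_smooth : ContDiffOn ℝ 2 xi (Set.Icc 0 1)
  zeta_smooth : ContDiffOn ℝ 2 zeta (Set.Ioc 0 1)
  xi_pos : ∀ r ∈ Set.Icc (0:ℝ) 1, 0 < xi r
  zeta_pos : ∀ r ∈ Set.Ioc (0:ℝ) 1, 0 < zeta r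
  xi_ode : ∀ r ∈ Set.Ioo (0:ℝ) 1,
    -(deriv (deriv xi) r) - ((N : ℝ) - 1) / r * deriv xi r + xi r = 0
  zeta_ode : ∀ r ∈ Set.Ioo (0:ℝ) 1,
    -(deriv (deriv zeta) r) - ((N : ℝ) - 1) / r * deriv zeta r + zeta r = 0
  xi_deriv_zero : deriv xi 0 = 0
  zeta_deriv_one : deriv zeta 1 = 0
  xi_mono : StrictMonoOn xi (Set.Icc 0 1)
  xi_bdd : ∃ M : ℝ, ∀ r ∈ Set.Icc (0:ℝ) 1, xi r ≤ M
  zeta_anti : StrictAntiOn zeta (Set.Ioc 0 1)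
  wronskian : ∀ r ∈ Set.Ioc (0:ℝ) 1,
    r ^ (N - 1) * (deriv xi r * zeta r - xi r * deriv zeta r) = 1
  xi_lim : Filter.Tendsto xi (nhdsWithin 0 (Set.Ioi 0)) (nhds (1 / ((N : ℝ) - 2)))
  zeta_lim : Filter.Tendsto (fun r => r ^ (N - 2) * zeta r)
    (nhdsWithin 0 (Set.Ioi 0)) (nhds 1)
  zeta_deriv_lim : Filter.Tendsto (fun r => r ^ (N - 1) * deriv zeta r)
    (nhdsWithin 0 (Set.Ioi 0)) (nhds (-((N : ℝ) - 2)))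

namespace GreenData

variable {N : ℕ}

/-- The function `ξ_{[a,b]}` of the paper. -/
noncomputable def xiI (d : GreenData N) (a b : ℝ) : ℝ → ℝ :=
  if a = 0 then
    (if b = 1 then d.xi else fun r => d.xi r / deriv d.xi b)
  else if b = 1 then
    fun r => deriv d.xi a * d.zeta r - d.xi r * deriv d.zeta a
  else
    fun r => (deriv d.xi a * d.zeta r - d.xi r * deriv d.zeta a) /
      Real.sqrt (deriv d.xi a * deriv d.zeta b - deriv d.xi b * deriv d.zeta a)

/-- The function `ζ_{[a,b]}` of the paper. -/
noncomputable def zetaI (d : GreenData N) (a b : ℝ) : ℝ → ℝ :=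
  if a = 0 then
    (if b = 1 then d.zeta
     else fun r => deriv d.xi b * d.zeta r - d.xi r * deriv d.zeta b)
  else if b = 1 then
    fun r => -(d.zeta r / deriv d.zeta a)
  else
    fun r => (deriv d.xi b * d.zeta r - d.xi r * deriv d.zeta b) /
      Real.sqrt (deriv d.xi a * deriv d.zeta b - deriv d.xi b * deriv d.zeta a)

/-- The reflection law `ξ'_{[a,b]}(s)/ξ_{[a,b]}(s) + ζ'_{[a,b]}(s)/ζ_{[a,b]}(s) = 0`. -/
def ReflectionAt (d : GreenData N) (a b s : ℝ) : Prop :=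
  deriv (d.xiI a b) s / d.xiI a b s + deriv (d.zetaI a b) s / d.zetaI a b s = 0

/-- The Green function `G_{[a,b]}(r,s)`. -/
noncomputable def G (d : GreenData N) (a b r s : ℝ) : ℝ :=
  if r ≤ s then s ^ (N - 1) * d.xiI a b r * d.zetaI a b s
  else s ^ (N - 1) * d.xiI a b s * d.zetaI a b r

end GreenData

/-- `sbar` is the function associating to `0 ≤ a < b ≤ 1` the unique point
`s̄(a,b) ∈ (a,b)` satisfying the reflection law. -/
def IsSBar {N : ℕ} (d : GreenData N) (sbar : ℝ → ℝ → ℝ) : Prop :=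
  ∀ a b : ℝ, 0 ≤ a → a < b → b ≤ 1 →
    sbar a b ∈ Set.Ioo a b ∧ d.ReflectionAt a b (sbar a b) ∧
    ∀ s ∈ Set.Ioo a b, d.ReflectionAt a b s → s = sbar a b

/-- The map `M_∞^{(j)}` of the paper, with `α_j = s̄(β_{j-1},β_j)`. -/
noncomputable def Minf {N : ℕ} (d : GreenData N) (sbar : ℝ → ℝ → ℝ)
    (β : ℕ → ℝ) (j : ℕ) : ℝ :=
  (1 / (β j) ^ (N - 1)) *
    (1 / (deriv d.xi (β j) * d.zeta (sbar (β j) (β (j + 1))) -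
            d.xi (sbar (β j) (β (j + 1))) * deriv d.zeta (β j)) -
     1 / (deriv d.xi (β j) * d.zeta (sbar (β (j - 1)) (β j)) -
            d.xi (sbar (β (j - 1)) (β j)) * deriv d.zeta (β j)))

/-- Extension of a `(k-1)`-tuple `(β₁,…,β_{k-1})` by the conventions `β₀ = 0`, `β_k = 1`. -/
noncomputable def extendB (k : ℕ) (β : Fin (k - 1) → ℝ) : ℕ → ℝ := fun j =>
  if hj : 1 ≤ j ∧ j ≤ k - 1 then β ⟨j - 1, by omega⟩
  else if j = 0 then 0 else 1

/-- The open simplex `T = {0 = β₀ < β₁ < ⋯ < β_{k-1} < β_k = 1}` as a subset of `ℝ^{k-1}`. -/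
def TSet (k : ℕ) : Set (Fin (k - 1) → ℝ) :=
  {β | ∀ j < k, extendB k β j < extendB k β (j + 1)}

namespace GreenData

variable {N : ℕ}

lemma differentiableAt_xi (d : GreenData N) {r : ℝ} (hr : r ∈ Ioo (0:ℝ) 1) :
    DifferentiableAt ℝ d.xi r :=
  (d.xi_smooth.contDiffAt (Icc_mem_nhds hr.1 hr.2)).differentiableAt (by norm_num)

lemma differentiableAt_zeta (d : GreenData N) {r : ℝ} (hr : r ∈ Ioo (0:ℝ) 1) :
    DifferentiableAt ℝ d.zeta r :=
  (d.zeta_smooth.contDiffAt (Ioc_mem_nhds hr.1 hr.2)).differentiableAt (by norm_num)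

lemma differentiableAt_deriv_xi (d : GreenData N) {r : ℝ} (hr : r ∈ Ioo (0:ℝ) 1) :
    DifferentiableAt ℝ (deriv d.xi) r := by
  have h : ContDiffAt ℝ 2 d.xi r := d.xi_smooth.contDiffAt (Icc_mem_nhds hr.1 hr.2)
  have h1 : ContDiffAt ℝ 1 (fderiv ℝ d.xi) r := h.fderiv_right (by norm_num)
  exact (h1.differentiableAt (by norm_num)).clm_apply (differentiableAt_const (1:ℝ))

/-- The equation `ℒξ = 0` in divergence form. -/
lemma hasDerivAt_flux (hN : 3 ≤ N) (d : GreenData N) {r : ℝ} (hr : r ∈ Ioo (0:ℝ) 1) :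
    HasDerivAt (fun r => r ^ (N - 1) * deriv d.xi r) (r ^ (N - 1) * d.xi r) r := by
  have h := (hasDerivAt_pow (N - 1) r).mul (d.differentiableAt_deriv_xi hr).hasDerivAt
  refine h.congr_deriv ?_
  obtain ⟨k, rfl⟩ : ∃ k, N = k + 2 := ⟨N - 2, by omega⟩
  have ho := d.xi_ode r hr
  have hr0 : r ≠ 0 := hr.1.ne'
  have e1 : k + 2 - 1 = k + 1 := by omega
  have e2 : k + 1 - 1 = k := by omega
  rw [e1, e2]
  have : deriv (deriv d.xi) r = d.xi r - (((k + 2 : ℕ) : ℝ) - 1) / r * deriv d.xi r := by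
    linarith
  rw [this]
  push_cast
  field_simp
  ring

/-- The flux vanishes at the origin. By the Wronskian identity,
`r^(N-1) ξ' = r^(N-2) (1 + ξ · r^(N-1) ζ') / (r^(N-2) ζ)`. -/
lemma tendsto_flux (hN : 3 ≤ N) (d : GreenData N) :
    Tendsto (fun r => r ^ (N - 1) * deriv d.xi r) (𝓝[>] 0) (𝓝 0) := by
  have hpow : Tendsto (fun r : ℝ => r ^ (N - 2)) (𝓝[>] 0) (𝓝 0) := by
    have h : Tendsto (fun r : ℝ => r ^ (N - 2)) (𝓝 0) (𝓝 ((0:ℝ) ^ (N - 2))) :=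
      (continuous_pow _).tendsto 0
    rw [zero_pow (by omega)] at h
    exact h.mono_left nhdsWithin_le_nhds
  have hn := (tendsto_const_nhds (x := (1:ℝ))).add (d.xi_lim.mul d.zeta_deriv_lim)
  have h := (hpow.mul hn).div d.zeta_lim one_ne_zero
  rw [zero_mul, zero_div] at h
  refine h.congr' ?_
  filter_upwards [Ioo_mem_nhdsGT (zero_lt_one (α := ℝ))] with r hr
  have hw := d.wronskian r ⟨hr.1, hr.2.le⟩
  have hz := (d.zeta_pos r ⟨hr.1, hr.2.le⟩).ne'
  have hp : r ^ (N - 2) ≠ 0 := pow_ne_zero _ hr.1.ne'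
  simp only [Pi.div_apply]
  rw [div_eq_iff (mul_ne_zero hp hz)]
  linear_combination (-r ^ (N - 2)) * hw

lemma nonneg_of_monotoneOn {φ : ℝ → ℝ} (hφ : MonotoneOn φ (Ioo 0 1))
    (h0 : Tendsto φ (𝓝[>] 0) (𝓝 0)) {r : ℝ} (hr : r ∈ Ioo (0:ℝ) 1) : 0 ≤ φ r := by
  refine le_of_tendsto h0 ?_
  filter_upwards [Ioo_mem_nhdsGT hr.1] with x hx
  exact hφ ⟨hx.1, hx.2.trans hr.2⟩ hr hx.2.le

/-- Linear growth of `ξ'` at the origin, from both sides. -/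
lemma deriv_xi_bounds (hN : 3 ≤ N) (d : GreenData N) {r : ℝ} (hr : r ∈ Ioo (0:ℝ) 1) :
    d.xi 0 / N * r ≤ deriv d.xi r ∧ deriv d.xi r ≤ d.xi 1 / N * r := by
  have hN0 : (N : ℝ) ≠ 0 := by positivity
  have hpow : ∀ C : ℝ, Tendsto (fun r : ℝ => C / N * r ^ N) (𝓝[>] 0) (𝓝 0) := by
    intro C
    have h : Tendsto (fun r : ℝ => C / N * r ^ N) (𝓝 0) (𝓝 (C / N * (0:ℝ) ^ N)) :=
      (by fun_prop : Continuous fun r : ℝ => C / N * r ^ N).tendsto 0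
    rw [zero_pow (by omega), mul_zero] at h
    exact h.mono_left nhdsWithin_le_nhds
  have hder : ∀ C : ℝ, ∀ x ∈ Ioo (0:ℝ) 1,
      HasDerivAt (fun r => r ^ (N - 1) * deriv d.xi r - C / N * r ^ N)
        (x ^ (N - 1) * (d.xi x - C)) x := by
    intro C x hx
    refine ((d.hasDerivAt_flux hN hx).sub
      ((hasDerivAt_pow N x).const_mul (C / N))).congr_deriv ?_
    field_simp
  have hx0 : ∀ x ∈ Ioo (0:ℝ) 1, d.xi 0 ≤ d.xi x := fun x hx =>
    d.xi_mono.monotoneOn (by simp) ⟨hx.1.le, hx.2.le⟩ hx.1.le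
  have hx1 : ∀ x ∈ Ioo (0:ℝ) 1, d.xi x ≤ d.xi 1 := fun x hx =>
    d.xi_mono.monotoneOn ⟨hx.1.le, hx.2.le⟩ (by simp) hx.2.le
  have hlow : 0 ≤ r ^ (N - 1) * deriv d.xi r - d.xi 0 / N * r ^ N := by
    refine nonneg_of_monotoneOn
      (φ := fun r => r ^ (N - 1) * deriv d.xi r - d.xi 0 / N * r ^ N) ?_ ?_ hr
    · refine monotoneOn_of_hasDerivWithinAt_nonneg (convex_Ioo 0 1)
        (fun x hx => (hder (d.xi 0) x hx).continuousAt.continuousWithinAt)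
        (f' := fun x => x ^ (N - 1) * (d.xi x - d.xi 0)) ?_ ?_
      · intro x hx
        rw [interior_Ioo] at hx
        exact (hder _ x hx).hasDerivWithinAt
      · intro x hx
        rw [interior_Ioo] at hx
        exact mul_nonneg (pow_nonneg hx.1.le _) (sub_nonneg.2 (hx0 x hx))
    · simpa using (d.tendsto_flux hN).sub (hpow (d.xi 0))
  have hupp : 0 ≤ -(r ^ (N - 1) * deriv d.xi r - d.xi 1 / N * r ^ N) := by
    refine nonneg_of_monotoneOn
      (φ := fun r => -(r ^ (N - 1) * deriv d.xi r - d.xi 1 / N * r ^ N)) ?_ ?_ hr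
    · refine monotoneOn_of_hasDerivWithinAt_nonneg (convex_Ioo 0 1)
        (fun x hx => (hder (d.xi 1) x hx).neg.continuousAt.continuousWithinAt)
        (f' := fun x => -(x ^ (N - 1) * (d.xi x - d.xi 1))) ?_ ?_
      · intro x hx
        rw [interior_Ioo] at hx
        exact (hder _ x hx).neg.hasDerivWithinAt
      · intro x hx
        rw [interior_Ioo] at hx
        exact neg_nonneg.2
          (mul_nonpos_of_nonneg_of_nonpos (pow_nonneg hx.1.le _) (sub_nonpos.2 (hx1 x hx)))
    · simpa using ((d.tendsto_flux hN).sub (hpow (d.xi 1))).neg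
  have hp : 0 < r ^ (N - 1) := pow_pos hr.1 _
  have hs : r ^ N = r ^ (N - 1) * r := by rw [← pow_succ]; congr 1; omega
  rw [hs] at hlow hupp
  constructor
  · refine le_of_mul_le_mul_left ?_ hp
    linarith
  · refine le_of_mul_le_mul_left ?_ hp
    linarith

lemma zeta_bounds (hN : 3 ≤ N) (d : GreenData N) :
    ∃ δ ∈ Ioo (0:ℝ) 1, ∀ r, 0 < r → r < δ →
      r ^ (N - 2) * d.zeta r ≤ 2 ∧
      ((N : ℝ) - 2) / 2 ≤ r ^ (N - 1) * -deriv d.zeta r ∧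
      r ^ (N - 1) * -deriv d.zeta r ≤ 2 * ((N : ℝ) - 2) := by
  have hn : (0:ℝ) < (N : ℝ) - 2 := by
    have : (3:ℝ) ≤ N := by exact_mod_cast hN
    linarith
  have e1 := d.zeta_lim.eventually_le_const (show (1:ℝ) < 2 by norm_num)
  have e2 := d.zeta_deriv_lim.eventually_le_const
    (show -((N : ℝ) - 2) < -(((N : ℝ) - 2) / 2) by linarith)
  have e3 := d.zeta_deriv_lim.eventually_const_le
    (show -(2 * ((N : ℝ) - 2)) < -((N : ℝ) - 2) by linarith)
  obtain ⟨u, hu, hsub⟩ := mem_nhdsGT_iff_exists_Ioo_subset.1 ((e1.and e2).and e3)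
  have hu' : (0:ℝ) < u := hu
  refine ⟨min u (1 / 2), ⟨by positivity, (min_le_right _ _).trans_lt (by norm_num)⟩, ?_⟩
  intro r h0 h1
  obtain ⟨⟨k1, k2⟩, k3⟩ := hsub ⟨h0, h1.trans_le (min_le_left _ _)⟩
  exact ⟨k1, by linarith, by linarith⟩

/-- The logarithmic derivative of `Aζ - ξB` for `A ≥ 0 > B` is at most that of `ξ`. -/
lemma logDeriv_le {p q x z A B : ℝ} (hA : 0 ≤ A) (hB : B < 0) (hp : 0 ≤ p) (hq : q ≤ 0)
    (hx : 0 < x) (hz : 0 ≤ z) : (A * q - p * B) / (A * z - x * B) ≤ p / x := by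
  have hBx : 0 < x * -B := mul_pos hx (neg_pos.2 hB)
  have hAz : 0 ≤ A * z := mul_nonneg hA hz
  rw [div_le_div_iff₀ (by linarith) hx]
  have h1 : A * q * x ≤ 0 :=
    mul_nonpos_of_nonpos_of_nonneg (mul_nonpos_of_nonneg_of_nonpos hA hq) hx.le
  have h2 : 0 ≤ p * (A * z) := mul_nonneg hp hAz
  linarith

/-- The normalising factor `K` cancels in the logarithmic derivative of `(Aζ - ξB)/K`. -/
lemma logDeriv_combination (d : GreenData N) (A B K : ℝ) (hK : K ≠ 0) {s : ℝ}
    (hs : s ∈ Ioo (0:ℝ) 1) :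
    deriv (fun r => (A * d.zeta r - d.xi r * B) / K) s / ((A * d.zeta s - d.xi s * B) / K) =
      (A * deriv d.zeta s - deriv d.xi s * B) / (A * d.zeta s - d.xi s * B) := by
  have h : HasDerivAt (fun r => (A * d.zeta r - d.xi r * B) / K)
      ((A * deriv d.zeta s - deriv d.xi s * B) / K) s :=
    (((d.differentiableAt_zeta hs).hasDerivAt.const_mul A).sub
      ((d.differentiableAt_xi hs).hasDerivAt.mul_const B)).div_const K
  rw [h.deriv, div_div_div_cancel_right₀ hK]

/-- An inequality free of `a` that follows from the reflection law at `s`. The hypothesis `hne`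
says that the reflection law is not vacuously true on `(a,b)`; it excludes a normalising square
root with junk value `0`. -/
lemma reflection_ineq (d : GreenData N) {a b s : ℝ} (ha : 0 ≤ a) (hb : b < 1)
    (hs : s ∈ Ioo a b) (hxi : ∀ r ∈ Ioo 0 1, 0 < deriv d.xi r)
    (hzeta : ∀ r, 0 < r → r ≤ b → deriv d.zeta r < 0)
    (hne : ∃ t ∈ Ioo a b, ¬ d.ReflectionAt a b t) (h : d.ReflectionAt a b s) :
    deriv d.xi b * (-deriv d.zeta s * d.xi s - deriv d.xi s * d.zeta s) ≤
      2 * deriv d.xi s * -deriv d.zeta b * d.xi s := by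
  have hs0 : 0 < s := ha.trans_lt hs.1
  have hs1 : s ∈ Ioo (0:ℝ) 1 := ⟨hs0, hs.2.trans hb⟩
  have hb1 : b ∈ Ioo (0:ℝ) 1 := ⟨hs0.trans hs.2, hb⟩
  have hx := d.xi_pos s ⟨hs0.le, hs1.2.le⟩
  have hz := d.zeta_pos s ⟨hs0, hs1.2.le⟩
  have hp := hxi s hs1
  have hpb := hxi b hb1
  have hq := hzeta s hs0 hs.2.le
  have hqb := hzeta b hb1.1 le_rfl
  have key : 0 ≤ deriv d.xi s / d.xi s +
      (deriv d.xi b * deriv d.zeta s - deriv d.xi s * deriv d.zeta b) /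
        (deriv d.xi b * d.zeta s - d.xi s * deriv d.zeta b) := by
    unfold ReflectionAt xiI zetaI at h
    rcases eq_or_ne a 0 with rfl | ha0
    · simp only [if_true, if_neg hb.ne] at h
      have e1 := d.logDeriv_combination 0 (-1) (deriv d.xi b) hpb.ne' hs1
      have e2 := d.logDeriv_combination (deriv d.xi b) (deriv d.zeta b) 1 one_ne_zero hs1
      simp only [zero_mul, mul_neg, mul_one, sub_neg_eq_add, zero_add, div_one] at e1 e2
      rw [e1, e2] at h
      exact h.ge
    · simp only [if_neg ha0, if_neg hb.ne] at h
      have ha1 : a ∈ Ioo (0:ℝ) 1 := ⟨lt_of_le_of_ne ha ha0.symm, hs.1.trans hs1.2⟩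
      by_cases hK : √(deriv d.xi a * deriv d.zeta b - deriv d.xi b * deriv d.zeta a) = 0
      · exfalso
        obtain ⟨t, -, ht⟩ := hne
        apply ht
        unfold ReflectionAt xiI zetaI
        simp [if_neg ha0, if_neg hb.ne, hK]
      · rw [d.logDeriv_combination _ _ _ hK hs1, d.logDeriv_combination _ _ _ hK hs1] at h
        have := logDeriv_le (hxi a ha1).le (hzeta a ha1.1 (hs.1.trans hs.2).le) hp.le hq.le hx
          hz.le
        linarith
  have hg : 0 < deriv d.xi b * d.zeta s - d.xi s * deriv d.zeta b := by
    have h1 := mul_pos hpb hz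
    have h2 := mul_pos hx (neg_pos.2 hqb)
    linarith
  rw [div_add_div _ _ hx.ne' hg.ne'] at key
  have h2 := nonneg_of_mul_nonneg_left key (inv_pos.2 (mul_pos hx hg))
  linarith

end GreenData

theorem statement6 {N : ℕ} (hN : 3 ≤ N) (d : GreenData N)
    (sbar : ℝ → ℝ → ℝ) (hsbar : IsSBar d sbar) :
    ∃ c ∈ Set.Ioo (0:ℝ) 1, ∃ b₀ ∈ Set.Ioo (0:ℝ) 1,
      ∀ a b : ℝ, 0 ≤ a → a < b → b ≤ b₀ →
        c * b ≤ sbar a b ∧ sbar a b < b := by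
  have hN3 : (3:ℝ) ≤ N := by exact_mod_cast hN
  have hN0 : (0:ℝ) < N := by linarith
  obtain ⟨n, hn⟩ : ∃ n : ℝ, n = (N : ℝ) - 2 := ⟨_, rfl⟩
  have hnpos : 0 < n := by linarith
  obtain ⟨δ, hδ, hδz⟩ := d.zeta_bounds hN
  rw [← hn] at hδz
  have hx0 : 0 < d.xi 0 := d.xi_pos 0 (by simp)
  have hx01 : d.xi 0 < d.xi 1 := d.xi_mono (by simp) (by simp) one_pos
  have hx1 : 0 < d.xi 1 := hx0.trans hx01
  obtain ⟨m, hm⟩ : ∃ m, m = d.xi 0 / N := ⟨_, rfl⟩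
  obtain ⟨M, hM⟩ : ∃ M, M = d.xi 1 / N := ⟨_, rfl⟩
  have hmpos : 0 < m := hm ▸ div_pos hx0 hN0
  have hMpos : 0 < M := hM ▸ div_pos hx1 hN0
  have hmM : m < M := by rw [hm, hM]; gcongr
  have hxib : ∀ r ∈ Ioo (0:ℝ) 1, m * r ≤ deriv d.xi r ∧ deriv d.xi r ≤ M * r := by
    intro r hr
    rw [hm, hM]
    exact d.deriv_xi_bounds hN hr
  -- The second entry makes `ξ' ζ / ξ` at most half of the lower bound for `-ζ'`.
  obtain ⟨b₀, hb₀⟩ : ∃ b₀, b₀ = min (δ / 2) (n * d.xi 0 / (8 * M)) := ⟨_, rfl⟩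
  have hb₀pos : 0 < b₀ := by
    rw [hb₀]
    have := hδ.1
    positivity
  have hb₀δ : b₀ ≤ δ / 2 := hb₀ ▸ min_le_left _ _
  have hb₀n : b₀ ≤ n * d.xi 0 / (8 * M) := hb₀ ▸ min_le_right _ _
  have hc0 : 0 < m / (16 * M) := by positivity
  have hc1 : m / (16 * M) < 1 := by
    rw [div_lt_one (by positivity)]
    linarith
  refine ⟨m / (16 * M), ⟨hc0, hc1⟩, b₀, ⟨hb₀pos, by linarith [hδ.1, hδ.2]⟩, ?_⟩
  intro a b ha hab hb
  have hbδ : b < δ := by linarith [hδ.1]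
  have hb1 : b < 1 := hbδ.trans hδ.2
  obtain ⟨hs, href, huniq⟩ := hsbar a b ha hab hb1.le
  refine ⟨?_, hs.2⟩
  generalize sbar a b = s at hs href huniq
  have hs0 : 0 < s := ha.trans_lt hs.1
  have hs1 : s < 1 := hs.2.trans hb1
  have hb0 : 0 < b := hs0.trans hs.2
  have hne : ∃ t ∈ Ioo a b, ¬ d.ReflectionAt a b t := by
    refine ⟨(a + s) / 2, ⟨by linarith [hs.1], by linarith [hs.1, hs.2]⟩, fun h => ?_⟩
    have := huniq _ ⟨by linarith [hs.1], by linarith [hs.1, hs.2]⟩ h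
    linarith [hs.1]
  have hzneg : ∀ r, 0 < r → r ≤ b → deriv d.zeta r < 0 := by
    intro r h0 h1
    have h2 := (hδz r h0 (h1.trans_lt hbδ)).2.1
    have h3 : 0 < r ^ (N - 1) * -deriv d.zeta r := lt_of_lt_of_le (by positivity) h2
    exact neg_pos.1 (pos_of_mul_pos_right h3 (pow_nonneg h0.le _))
  have hineq := d.reflection_ineq ha hb1 hs
    (fun r hr => lt_of_lt_of_le (mul_pos hmpos hr.1) (hxib r hr).1) hzneg hne href
  obtain ⟨z1, z2, -⟩ := hδz s hs0 (hs.2.trans hbδ)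
  obtain ⟨-, -, z3⟩ := hδz b hb0 hbδ
  have hps := (hxib s ⟨hs0, hs1⟩).2
  have hps0 : 0 < deriv d.xi s := lt_of_lt_of_le (mul_pos hmpos hs0) (hxib s ⟨hs0, hs1⟩).1
  have hpb := (hxib b ⟨hb0, hb1⟩).1
  have hxs : d.xi 0 ≤ d.xi s :=
    d.xi_mono.monotoneOn (by simp) ⟨hs0.le, hs1.le⟩ hs0.le
  have hxspos : 0 < d.xi s := hx0.trans_le hxs
  have hzs := d.zeta_pos s ⟨hs0, hs1.le⟩
  have hsN : s ^ (N - 1) = s ^ (N - 2) * s := by rw [← pow_succ]; congr 1; omega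
  have hsN' : s ^ N = s ^ (N - 1) * s := by rw [← pow_succ]; congr 1; omega
  have hbN' : b ^ N = b ^ (N - 1) * b := by rw [← pow_succ]; congr 1; omega
  have hS : 0 < s ^ (N - 1) := pow_pos hs0 _
  have hB : 0 < b ^ (N - 1) := pow_pos hb0 _
  have hsmall : s ^ (N - 1) * (deriv d.xi s * d.zeta s) ≤ n / 4 * d.xi s := by
    have h1 : s ^ (N - 1) * (deriv d.xi s * d.zeta s) =
        (s * deriv d.xi s) * (s ^ (N - 2) * d.zeta s) := by rw [hsN]; ring
    have h2 : s * deriv d.xi s ≤ M * s := by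
      calc s * deriv d.xi s ≤ 1 * deriv d.xi s := by gcongr
        _ ≤ M * s := by linarith
    have h3 : s * (8 * M) ≤ n * d.xi 0 :=
      (le_div_iff₀ (by positivity)).1 ((hs.2.le.trans hb).trans hb₀n)
    calc s ^ (N - 1) * (deriv d.xi s * d.zeta s)
        = (s * deriv d.xi s) * (s ^ (N - 2) * d.zeta s) := h1
      _ ≤ (M * s) * 2 := by gcongr
      _ ≤ n / 4 * d.xi 0 := by linarith
      _ ≤ n / 4 * d.xi s := by gcongr
  have hbr : n / 4 * d.xi s ≤
      s ^ (N - 1) * (-deriv d.zeta s * d.xi s - deriv d.xi s * d.zeta s) := by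
    have := mul_le_mul_of_nonneg_right z2 hxspos.le
    linarith
  have hL : (m * b) * (n / 4 * d.xi s) ≤ deriv d.xi b *
      (s ^ (N - 1) * (-deriv d.zeta s * d.xi s - deriv d.xi s * d.zeta s)) :=
    mul_le_mul hpb hbr (by positivity) (le_trans (by positivity) hpb)
  have hR : deriv d.xi s * (b ^ (N - 1) * -deriv d.zeta b) ≤ (M * s) * (2 * n) :=
    mul_le_mul hps z3 (mul_nonneg hB.le (neg_pos.2 (hzneg b hb0 le_rfl)).le) (by positivity)
  have hfin : (n * d.xi s) * (m * b ^ N) ≤ (n * d.xi s) * (16 * M * s ^ N) := by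
    have h1 := mul_le_mul_of_nonneg_left hL hB.le
    have h2 := mul_le_mul_of_nonneg_left hineq (mul_pos hS hB).le
    have h3 := mul_le_mul_of_nonneg_left hR
      (show 0 ≤ 2 * s ^ (N - 1) * d.xi s by positivity)
    rw [hsN', hbN']
    linarith
  have hfin' := le_of_mul_le_mul_left hfin (by positivity)
  have hpow : (m / (16 * M) * b) ^ N ≤ s ^ N := by
    calc (m / (16 * M) * b) ^ N = (m / (16 * M)) ^ N * b ^ N := mul_pow _ _ _
      _ ≤ m / (16 * M) * b ^ N := by
        gcongr
        exact pow_le_of_le_one hc0.le hc1.le (by omega)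
      _ = m * b ^ N / (16 * M) := by ring
      _ ≤ s ^ N := by
        rw [div_le_iff₀ (by positivity)]
        linarith
  exact le_of_pow_le_pow_left₀ (by omega) hs0.le hpow
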